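/- There is a group homomorphism ρ : Γ → Γ of the figure-8 knot group with ρ(g) = g⁻¹·h·g and ρ(h) = h·g⁻¹·h·g·h⁻¹, and ρ satisfies ρ ∘ ρ = id; in particular ρ is an order-2 automorphism of Γ (the automorphism induced by a strong inversion of the figure-8 knot). -/

import Mathlib

/-- The single relator of the figure-8 knot group, in the free group on two
generators `0 ↦ g`, `1 ↦ h`: the word `h⁻¹·g⁻¹·h·g·h⁻¹·g·h·g⁻¹·h⁻¹·g`. -/
def fig8Rel : FreeGroup (Fin 2) :=
  (FreeGroup.of 1)⁻¹ * (FreeGroup.of 0)⁻¹ * FreeGroup.of 1 * FreeGroup.of 0 *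
    (FreeGroup.of 1)⁻¹ * FreeGroup.of 0 * FreeGroup.of 1 * (FreeGroup.of 0)⁻¹ *
    (FreeGroup.of 1)⁻¹ * FreeGroup.of 0

/-- The figure-8 knot group, presented with two generators and one relation. -/
abbrev Fig8Group : Type := PresentedGroup ({fig8Rel} : Set (FreeGroup (Fin 2)))

/-- The first generator `g` of the figure-8 knot group. -/
def fig8g : Fig8Group := PresentedGroup.of 0

/-- The second generator `h` of the figure-8 knot group. -/
def fig8h : Fig8Group := PresentedGroup.of 1

/-!
Put `a = g⁻¹hg`, so that `Γ` is generated by `g` and `a`, with `h = gag⁻¹`. Written in `g` and `a`,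
the relator becomes conjugate to its own inverse when `g` and `a` are exchanged, so there is an
involution `ρ` of `Γ` swapping `g` and `a`. It sends `h = gag⁻¹` to `aga⁻¹`, and the relation says
precisely that `aga⁻¹ = hah⁻¹`.
-/

section Words

variable {G : Type*} [Group G]

/-- The figure-8 relator evaluated at a pair of elements of an arbitrary group, `x` in place of `g`
and `y` in place of `h`. -/
def fig8Word (x y : G) : G :=
  y⁻¹ * x⁻¹ * y * x * y⁻¹ * x * y * x⁻¹ * y⁻¹ * x

theorem lift_fig8Rel (f : Fin 2 → G) : FreeGroup.lift f fig8Rel = fig8Word (f 0) (f 1) := by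
  simp only [fig8Rel, fig8Word, map_mul, map_inv, FreeGroup.lift_apply_of]

theorem fig8Word_conj_swap (x a : G) :
    fig8Word a (a * x * a⁻¹) =
      (x * a * x⁻¹ * a⁻¹) * (fig8Word x (x * a * x⁻¹))⁻¹ * (x * a * x⁻¹ * a⁻¹)⁻¹ := by
  simp only [fig8Word]
  group

theorem fig8Word_conj_eq_one_comm {x a : G} :
    fig8Word x (x * a * x⁻¹) = 1 ↔ fig8Word a (a * x * a⁻¹) = 1 := by
  rw [fig8Word_conj_swap, conj_eq_one_iff, inv_eq_one]

theorem fig8Word_conj_eq_one_iff {x a : G} :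
    fig8Word x (x * a * x⁻¹) = 1 ↔ a * x * a⁻¹ = (x * a * x⁻¹) * a * (x * a * x⁻¹)⁻¹ := by
  have quotient_eq_conj_relator :
      a * x * a⁻¹ * ((x * a * x⁻¹) * a * (x * a * x⁻¹)⁻¹)⁻¹ =
        (x * a * x⁻¹) * fig8Word x (x * a * x⁻¹) * (x * a * x⁻¹)⁻¹ := by
    simp only [fig8Word]
    group
  rw [← mul_inv_eq_one (a := a * x * a⁻¹), quotient_eq_conj_relator, conj_eq_one_iff]

end Words

namespace Fig8Group

theorem fig8Word_fig8g_fig8h : fig8Word fig8g fig8h = 1 :=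
  PresentedGroup.one_of_mem (rels := {fig8Rel}) rfl

section UniversalProperty

variable {G : Type*} [Group G]

/-- The universal property of the figure-8 knot group: a pair of elements of `G` satisfying the
relation determines a homomorphism to `G` that sends `g` and `h` to them. -/
def lift (x y : G) (hxy : fig8Word x y = 1) : Fig8Group →* G :=
  PresentedGroup.toGroup (f := ![x, y]) fun r hr => by
    rw [Set.mem_singleton_iff.1 hr, lift_fig8Rel]
    exact hxy

theorem lift_fig8g (x y : G) (hxy : fig8Word x y = 1) : lift x y hxy fig8g = x :=
  PresentedGroup.toGroup.of _

theorem lift_fig8h (x y : G) (hxy : fig8Word x y = 1) : lift x y hxy fig8h = y :=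
  PresentedGroup.toGroup.of _

theorem hom_ext {φ ψ : Fig8Group →* G} (hg : φ fig8g = ψ fig8g) (hh : φ fig8h = ψ fig8h) :
    φ = ψ :=
  PresentedGroup.ext (Fin.forall_fin_two.2 ⟨hg, hh⟩)

end UniversalProperty

/-- The element `a = g⁻¹hg`, which generates the figure-8 knot group together with `g`. -/
def fig8a : Fig8Group := fig8g⁻¹ * fig8h * fig8g

theorem fig8h_eq_conj : fig8h = fig8g * fig8a * fig8g⁻¹ := by
  simp only [fig8a]
  group

theorem fig8Word_fig8g_conj : fig8Word fig8g (fig8g * fig8a * fig8g⁻¹) = 1 :=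
  fig8h_eq_conj ▸ fig8Word_fig8g_fig8h

/-- The endomorphism of the figure-8 knot group induced by the strong inversion, constructed as the
one exchanging `g` and `a`. -/
def strongInversion : Fig8Group →* Fig8Group :=
  lift fig8a (fig8a * fig8g * fig8a⁻¹) (fig8Word_conj_eq_one_comm.1 fig8Word_fig8g_conj)

theorem strongInversion_fig8g : strongInversion fig8g = fig8a :=
  lift_fig8g _ _ _

theorem strongInversion_fig8h : strongInversion fig8h = fig8a * fig8g * fig8a⁻¹ :=
  lift_fig8h _ _ _

theorem strongInversion_fig8a : strongInversion fig8a = fig8g := by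
  rw [fig8a, map_mul, map_mul, map_inv, strongInversion_fig8g, strongInversion_fig8h]
  group

theorem strongInversion_comp_self :
    strongInversion.comp strongInversion = MonoidHom.id Fig8Group := by
  refine hom_ext ?_ ?_
  · simp only [MonoidHom.comp_apply, MonoidHom.id_apply, strongInversion_fig8g,
      strongInversion_fig8a]
  · simp only [MonoidHom.comp_apply, MonoidHom.id_apply, strongInversion_fig8h, map_mul, map_inv,
      strongInversion_fig8g, strongInversion_fig8a, ← fig8h_eq_conj]

theorem strongInversion_fig8h_eq_conj : strongInversion fig8h = fig8h * fig8a * fig8h⁻¹ := by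
  rw [strongInversion_fig8h, fig8h_eq_conj]
  exact fig8Word_conj_eq_one_iff.1 fig8Word_fig8g_conj

end Fig8Group

/-- The order-2 automorphism of the figure-8 knot group induced by the strong
inversion: `ρ(g) = g⁻¹·h·g`, `ρ(h) = h·g⁻¹·h·g·h⁻¹`, with `ρ ∘ ρ = id`. -/
theorem fig8_strong_inversion_automorphism :
    ∃ ρ : Fig8Group →* Fig8Group,
      ρ fig8g = fig8g⁻¹ * fig8h * fig8g ∧
      ρ fig8h = fig8h * fig8g⁻¹ * fig8h * fig8g * fig8h⁻¹ ∧
      ρ.comp ρ = MonoidHom.id Fig8Group := by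
  refine ⟨Fig8Group.strongInversion, Fig8Group.strongInversion_fig8g, ?_,
    Fig8Group.strongInversion_comp_self⟩
  rw [Fig8Group.strongInversion_fig8h_eq_conj, Fig8Group.fig8a]
  group
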